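/- arXiv:1503.07211 — 3 statements merged into one kernel-verified Lean document; each statement's English description precedes it below -/
import Mathlib

section
/- Let n ≥ 2 and N = 2^{n-1} − 1, and let Q_n^N be the collection of kernels of the form Q(·|z) = λ_z δ_{bin_n(2l(z))} + (1−λ_z) δ_{bin_n(2l(z)+1)}, z ∈ {0,1}^N, that lie in the closure of F_{N,n} and realize arbitrary prescribed ratios (∑_{z: l(z)=l} λ_z)/(∑_{z: l(z)=l}(1−λ_z)) = r_l > 0 for all l. Then { p^⊤Q : p ∈ E_N, Q ∈ Q_n^N } = Δ_n^+, the set of strictly positive probability distributions on {0,1}^n. -/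
open Finset

/-- The logistic sigmoid function `σ(a) = 1/(1+exp(-a))`. -/
noncomputable def sigmoid (a : ℝ) : ℝ := 1 / (1 + Real.exp (-a))

/-- Real value of a bit. -/
def bval (b : Bool) : ℝ := if b then 1 else 0

/-- The set `F_{k,m}` of Markov kernels representable by a feedforward layer of `m`
sigmoid stochastic units with `k` binary inputs. -/
noncomputable def Fset (k m : ℕ) : Set ((Fin k → Bool) → (Fin m → Bool) → ℝ) :=
  {P | ∃ (V : Fin m → Fin k → ℝ) (c : Fin m → ℝ), ∀ y z,
    P y z = ∏ j, (if z j then sigmoid ((∑ i, V j i * bval (y i)) + c j)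
                  else 1 - sigmoid ((∑ i, V j i * bval (y i)) + c j))}

/-- `Δ_{k,n}`: all Markov kernels from `{0,1}^k` to distributions on `{0,1}^n`. -/
def markovKernels (k n : ℕ) : Set ((Fin k → Bool) → (Fin n → Bool) → ℝ) :=
  {P | (∀ y x, 0 ≤ P y x) ∧ ∀ y, ∑ x, P y x = 1}

/-- Composition of Markov kernels: `(R ∘ Q)(x|y) = ∑_z Q(z|y) R(x|z)`. -/
noncomputable def kcomp {k m n : ℕ} (R : (Fin m → Bool) → (Fin n → Bool) → ℝ)
    (Q : (Fin k → Bool) → (Fin m → Bool) → ℝ) : (Fin k → Bool) → (Fin n → Bool) → ℝ :=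
  fun y x => ∑ z, Q y z * R z x

/-- `Δ_n`: probability distributions on `{0,1}^n`. -/
def simplex (n : ℕ) : Set ((Fin n → Bool) → ℝ) :=
  {p | (∀ x, 0 ≤ p x) ∧ ∑ x, p x = 1}

/-- `Δ_n^+`: strictly positive probability distributions on `{0,1}^n`. -/
def simplexPos (n : ℕ) : Set ((Fin n → Bool) → ℝ) :=
  {p | (∀ x, 0 < p x) ∧ ∑ x, p x = 1}

/-- Mixture `p^⊤ R` of the rows of a kernel `R` with weights `p`. -/
noncomputable def mix {m n : ℕ} (p : (Fin m → Bool) → ℝ)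
    (R : (Fin m → Bool) → (Fin n → Bool) → ℝ) : (Fin n → Bool) → ℝ :=
  fun x => ∑ z, p z * R z x

/-- `E_m`: strictly positive product distributions on `{0,1}^m`, where the `j`-th bit
is `0` with probability `q j ∈ (0,1)`. -/
def Eset (m : ℕ) : Set ((Fin m → Bool) → ℝ) :=
  {p | ∃ q : Fin m → ℝ, (∀ j, q j ∈ Set.Ioo (0:ℝ) 1) ∧
    ∀ z, p z = ∏ j, (if z j then 1 - q j else q j)}

/-- Integer value of a binary vector (bit `i` has weight `2^i`). -/
def intval {k : ℕ} (y : Fin k → Bool) : ℕ := ∑ i, if y i then 2 ^ (i : ℕ) else 0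

/-- `l(z)`: position (1-based) of the largest nonzero entry of `z`, and `0` if `z = 0`. -/
def lidx {N : ℕ} (z : Fin N → Bool) : ℕ :=
  (Finset.univ.filter (fun j => z j = true)).sup (fun j => (j : ℕ) + 1)

/-- `bin_n(l)`: the `n`-bit binary representation of `l`. -/
def binVec (n l : ℕ) : Fin n → Bool := fun i => Nat.testBit l (i : ℕ)

/-- Point measure at `x ∈ {0,1}^n`. -/
noncomputable def deltaAt {n : ℕ} (x : Fin n → Bool) : (Fin n → Bool) → ℝ :=
  fun x' => if x' = x then 1 else 0

/-- The collection `Q_n^N` of kernels `Q(·|z) = λ_z δ_{bin_n(2l(z))} + (1-λ_z) δ_{bin_n(2l(z)+1)}`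
lying in the closure of `F_{N,n}` and realizing some positive ratio
`(∑_{z:l(z)=l} λ_z)/(∑_{z:l(z)=l}(1-λ_z)) = r_l > 0` for every `l ∈ {0,…,N}`. -/
noncomputable def Qcoll (n : ℕ) :
    Set ((Fin (2 ^ (n - 1) - 1) → Bool) → (Fin n → Bool) → ℝ) :=
  {Q | ∃ lam : (Fin (2 ^ (n - 1) - 1) → Bool) → ℝ,
    (∀ z, lam z ∈ Set.Icc (0:ℝ) 1) ∧
    (∀ z x, Q z x = lam z * deltaAt (binVec n (2 * lidx z)) x
        + (1 - lam z) * deltaAt (binVec n (2 * lidx z + 1)) x) ∧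
    Q ∈ closure (Fset (2 ^ (n - 1) - 1) n) ∧
    (∀ l ≤ 2 ^ (n - 1) - 1, ∃ r : ℝ, 0 < r ∧
      (∑ z ∈ Finset.univ.filter (fun z => lidx z = l), lam z)
        = r * (∑ z ∈ Finset.univ.filter (fun z => lidx z = l), (1 - lam z)))}

namespace Aux6

lemma sigmoid_pos (a : ℝ) : 0 < sigmoid a := by
  unfold sigmoid; positivity

lemma sigmoid_lt_one (a : ℝ) : sigmoid a < 1 := by
  unfold sigmoid
  have := Real.exp_pos (-a)
  rw [div_lt_one (by positivity)]; linarith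

lemma sigmoid_cont : Continuous sigmoid := by
  unfold sigmoid
  refine Continuous.div (by fun_prop) (by fun_prop) ?_
  intro x; positivity

lemma sigmoid_top : Filter.Tendsto sigmoid Filter.atTop (nhds 1) := by
  unfold sigmoid
  have h : Filter.Tendsto (fun a : ℝ => Real.exp (-a)) Filter.atTop (nhds 0) :=
    Real.tendsto_exp_neg_atTop_nhds_zero
  have h2 := (tendsto_const_nhds (x := (1:ℝ))).div ((tendsto_const_nhds (x := (1:ℝ))).add h) (by norm_num)
  simp only [add_zero, div_one] at h2
  exact h2

lemma sigmoid_bot : Filter.Tendsto sigmoid Filter.atBot (nhds 0) := by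
  unfold sigmoid
  have h : Filter.Tendsto (fun a : ℝ => 1 + Real.exp (-a)) Filter.atBot Filter.atTop :=
    Filter.tendsto_atTop_add_const_left _ _
      (Real.tendsto_exp_atTop.comp Filter.tendsto_neg_atBot_atTop)
  have h2 := h.inv_tendsto_atTop
  simp only [one_div]
  exact h2

lemma lidx_le {N : ℕ} (z : Fin N → Bool) : lidx z ≤ N := by
  unfold lidx
  refine Finset.sup_le ?_
  intro j _
  have := j.2
  omega

lemma lidx_snoc_true {N : ℕ} (z : Fin N → Bool) :
    lidx (Fin.snoc z true : Fin (N+1) → Bool) = N + 1 := by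
  refine le_antisymm (lidx_le _) ?_
  unfold lidx
  have : Fin.last N ∈ Finset.univ.filter (fun j => (Fin.snoc z true : Fin (N+1) → Bool) j = true) := by
    simp
  exact Finset.le_sup (f := fun j : Fin (N+1) => (j:ℕ)+1) this

lemma lidx_snoc_false {N : ℕ} (z : Fin N → Bool) :
    lidx (Fin.snoc z false : Fin (N+1) → Bool) = lidx z := by
  unfold lidx
  apply le_antisymm
  · refine Finset.sup_le ?_
    intro j hj
    rcases Fin.eq_castSucc_or_eq_last j with ⟨i, rfl⟩ | rfl
    · simp at hj
      exact Finset.le_sup (f := fun j : Fin N => (j:ℕ)+1) (by simpa using hj)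
    · simp at hj
  · refine Finset.sup_le ?_
    intro j hj
    exact Finset.le_sup (f := fun j : Fin (N+1) => (j:ℕ)+1) (b := j.castSucc) (by simpa using hj)

lemma sum_snoc {N : ℕ} (f : (Fin (N+1) → Bool) → ℝ) :
    ∑ z, f z = ∑ z : Fin N → Bool, f (Fin.snoc z true) + ∑ z : Fin N → Bool, f (Fin.snoc z false) := by
  rw [← (Fin.snocEquiv (fun _ : Fin (N+1) => Bool)).sum_comp, Fintype.sum_prod_type]
  simp [Fin.snocEquiv]

lemma exists_snoc {N : ℕ} (z : Fin (N+1) → Bool) : ∃ z' b, z = Fin.snoc (α := fun _ => Bool) z' b :=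
  ⟨Fin.init z, z (Fin.last N), (Fin.snoc_init_self z).symm⟩

lemma lin_snoc {N : ℕ} (w : Fin N → ℝ) (t : ℝ) (z : Fin N → Bool) (b : Bool) :
    ∑ i, (Fin.snoc w t : Fin (N+1) → ℝ) i * bval ((Fin.snoc z b : Fin (N+1) → Bool) i)
      = ∑ i, w i * bval (z i) + t * bval b := by
  rw [Fin.sum_univ_castSucc]; simp

noncomputable def pr {N : ℕ} (q : Fin N → ℝ) (z : Fin N → Bool) : ℝ :=
  ∏ j, (if z j then 1 - q j else q j)

lemma pr_snoc {N : ℕ} (q : Fin N → ℝ) (t : ℝ) (z : Fin N → Bool) (b : Bool) :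
    pr (Fin.snoc q t : Fin (N+1) → ℝ) (Fin.snoc z b : Fin (N+1) → Bool)
      = pr q z * (if b then 1 - t else t) := by
  unfold pr
  rw [Fin.prod_univ_castSucc]; simp

lemma pr_sum {N : ℕ} (q : Fin N → ℝ) : ∑ z, pr q z = 1 := by
  induction N with
  | zero => simp [pr]
  | succ N ih =>
    rw [sum_snoc, ← Fin.snoc_init_self q]
    simp only [pr_snoc]
    rw [← Finset.sum_mul, ← Finset.sum_mul, ih]; simp

lemma pr_pos {N : ℕ} (q : Fin N → ℝ) (hq : ∀ j, q j ∈ Set.Ioo (0:ℝ) 1) (z) : 0 < pr q z := by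
  unfold pr
  refine Finset.prod_pos ?_
  intro j _
  have := hq j
  split_ifs
  · linarith [this.2]
  · exact this.1

lemma sign_lemma (f : ℕ → Bool) (N : ℕ) : ∃ (v : Fin N → ℝ) (c : ℝ), ∀ z : Fin N → Bool,
    if f (lidx z) then 0 < (∑ i, v i * bval (z i)) + c else (∑ i, v i * bval (z i)) + c < 0 := by
  induction N with
  | zero =>
    refine ⟨fun _ => 0, if f 0 then 1 else -1, ?_⟩
    intro z
    have : lidx z = 0 := by have := lidx_le z; omega
    rw [this]
    split_ifs <;> simp
  | succ N ih =>
    obtain ⟨v, c, h⟩ := ih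
    have hb : ∀ z : Fin N → Bool, |(∑ i, v i * bval (z i)) + c| ≤ ∑ i, |v i| + |c| := by
      intro z
      refine (abs_add_le _ _).trans ?_
      gcongr
      refine (Finset.abs_sum_le_sum_abs _ _).trans ?_
      refine Finset.sum_le_sum ?_
      intro i _
      unfold bval
      split_ifs <;> simp
    set M := ∑ i, |v i| + |c| with hM
    refine ⟨Fin.snoc v (if f (N+1) then M + 1 else -(M+1)), c, ?_⟩
    intro z
    obtain ⟨z', b, rfl⟩ := exists_snoc z
    rw [lin_snoc]
    cases b
    · rw [lidx_snoc_false]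
      simpa [bval] using h z'
    · rw [lidx_snoc_true]
      have := abs_le.1 (hb z')
      have hb1 : bval true = 1 := rfl
      rw [hb1, mul_one]
      split_ifs <;> linarith [this.1, this.2]

lemma ivt {N : ℕ} (p : (Fin N → Bool) → ℝ) (hp1 : ∑ z, p z = 1)
    (a : (Fin N → Bool) → ℝ) (y : ℝ) (h0 : 0 < y) (h1 : y < 1) :
    ∃ t, ∑ z, p z * sigmoid (a z + t) = y := by
  have hc : Continuous (fun t => ∑ z, p z * sigmoid (a z + t)) := by
    refine continuous_finsetSum _ ?_
    intro z _
    exact continuous_const.mul (sigmoid_cont.comp (by fun_prop))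
  have htop : Filter.Tendsto (fun t => ∑ z, p z * sigmoid (a z + t)) Filter.atTop (nhds 1) := by
    have : Filter.Tendsto (fun t => ∑ z, p z * sigmoid (a z + t)) Filter.atTop (nhds (∑ z, p z * 1)) := by
      refine tendsto_finsetSum _ ?_
      intro z _
      exact (sigmoid_top.comp (Filter.tendsto_atTop_add_const_left _ _ Filter.tendsto_id)).const_mul _
    simpa [hp1] using this
  have hbot : Filter.Tendsto (fun t => ∑ z, p z * sigmoid (a z + t)) Filter.atBot (nhds 0) := by
    have : Filter.Tendsto (fun t => ∑ z, p z * sigmoid (a z + t)) Filter.atBot (nhds (∑ z, p z * 0)) := by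
      refine tendsto_finsetSum _ ?_
      intro z _
      exact (sigmoid_bot.comp (Filter.tendsto_atBot_add_const_left _ _ Filter.tendsto_id)).const_mul _
    simpa using this
  obtain ⟨t1, ht1⟩ := (htop.eventually (lt_mem_nhds h1)).exists
  obtain ⟨t0, ht0⟩ := (hbot.eventually (gt_mem_nhds h0)).exists
  exact mem_range_of_exists_le_of_exists_ge hc ⟨t0, ht0.le⟩ ⟨t1, ht1.le⟩

lemma build (α β : ℕ → ℝ) (N : ℕ) (hα : ∀ l ≤ N, 0 < α l) (hβ : ∀ l ≤ N, 0 < β l) :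
    ∃ (q : Fin N → ℝ) (w : Fin N → ℝ) (b : ℝ), (∀ j, q j ∈ Set.Ioo (0:ℝ) 1) ∧
      ∀ l ≤ N,
        (∑ z, if lidx z = l then pr q z * sigmoid ((∑ i, w i * bval (z i)) + b) else 0)
          = β l / ∑ k ∈ Finset.range (N+1), (α k + β k) ∧
        (∑ z, if lidx z = l then pr q z * (1 - sigmoid ((∑ i, w i * bval (z i)) + b)) else 0)
          = α l / ∑ k ∈ Finset.range (N+1), (α k + β k) := by
  induction N with
  | zero =>
    have ha := hα 0 le_rfl
    have hb := hβ 0 le_rfl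
    obtain ⟨t, ht⟩ := ivt (N := 0) (fun _ => 1) (by simp) (fun _ => 0) (β 0 / (α 0 + β 0))
      (by positivity) (by rw [div_lt_one (by positivity)]; linarith)
    simp at ht
    refine ⟨fun _ => 0, fun _ => 0, t, fun j => j.elim0, ?_⟩
    intro l hl
    obtain rfl : l = 0 := by omega
    have h0 : ∀ z : Fin 0 → Bool, lidx z = 0 := by
      intro z; have := lidx_le z; omega
    simp [h0, pr, ht]
    field_simp
    ring
  | succ N ih =>
    obtain ⟨q, w, b, hq, h⟩ := ih (fun l hl => hα l (by omega)) (fun l hl => hβ l (by omega))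
    have ha := hα (N+1) le_rfl
    have hb := hβ (N+1) le_rfl
    rw [Finset.sum_range_succ _ (N+1)]
    have hS : 0 < ∑ k ∈ Finset.range (N+1), (α k + β k) := by
      refine Finset.sum_pos ?_ (by simp)
      intro k hk
      have hk := Finset.mem_range.1 hk
      have := hα k (by omega)
      have := hβ k (by omega)
      positivity
    set S := ∑ k ∈ Finset.range (N+1), (α k + β k) with hSd
    obtain ⟨t, ht⟩ := ivt (pr q) (pr_sum q) (fun z => (∑ i, w i * bval (z i)) + b)
      (β (N+1) / (α (N+1) + β (N+1)))
      (by positivity) (by rw [div_lt_one (by positivity)]; linarith)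
    set T := S + (α (N+1) + β (N+1)) with hT
    have hTp : 0 < T := by positivity
    refine ⟨Fin.snoc q (S / T), Fin.snoc w t, b, ?_, ?_⟩
    · intro j
      refine Fin.lastCases ?_ (fun i => ?_) j
      · simp only [Fin.snoc_last]
        exact ⟨by positivity, by rw [div_lt_one hTp]; linarith⟩
      · simpa using hq i
    · intro l hl
      rw [sum_snoc, sum_snoc]
      simp only [lidx_snoc_true, lidx_snoc_false, pr_snoc, lin_snoc]
      rcases Nat.lt_or_ge N l with hl2 | hl2
      · obtain rfl : l = N + 1 := by omega
        have hne : ∀ z : Fin N → Bool, lidx z ≠ N + 1 := by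
          intro z; have := lidx_le z; omega
        simp only [hne, if_true, if_false, Finset.sum_const_zero, add_zero, bval, mul_one]
        have e1 : ∀ z : Fin N → Bool, (∑ i, w i * (if z i = true then (1:ℝ) else 0)) + t + b
          = (∑ i, w i * bval (z i)) + b + t := by intro z; unfold bval; ring
        simp only [e1]
        have h1T : 1 - S / T = (α (N+1) + β (N+1)) / T := by
          rw [hT]; field_simp; ring
        rw [h1T]
        constructor
        · rw [← div_mul_div_cancel₀ (a := β (N+1)) (b := α (N+1) + β (N+1)) (by positivity), ← ht,
            Finset.sum_mul]
          refine Finset.sum_congr rfl fun z _ => by ring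
        · have : α (N+1) / (α (N+1) + β (N+1)) = ∑ z, pr q z * (1 - sigmoid ((∑ i, w i * bval (z i)) + b + t)) := by
            simp only [mul_sub, mul_one, Finset.sum_sub_distrib, pr_sum, ht]
            field_simp; ring
          rw [← div_mul_div_cancel₀ (a := α (N+1)) (b := α (N+1) + β (N+1)) (by positivity), this,
            Finset.sum_mul]
          refine Finset.sum_congr rfl fun z _ => by ring
      · have hne : N + 1 ≠ l := by omega
        have hh := h l hl2
        simp only [hne, if_false, Finset.sum_const_zero, zero_add, bval] at hh ⊢
        simp only [Bool.false_eq_true, if_false, mul_zero, add_zero]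
        constructor
        · rw [← div_mul_div_cancel₀ (a := β l) (b := S) (by positivity), ← hh.1, Finset.sum_mul]
          refine Finset.sum_congr rfl fun z _ => ?_
          split_ifs <;> ring
        · rw [← div_mul_div_cancel₀ (a := α l) (b := S) (by positivity), ← hh.2, Finset.sum_mul]
          refine Finset.sum_congr rfl fun z _ => ?_
          split_ifs <;> ring

lemma binVec_inj {n a b : ℕ} (ha : a < 2 ^ n) (hb : b < 2 ^ n) (h : binVec n a = binVec n b) :
    a = b := by
  apply Nat.eq_of_testBit_eq
  intro i
  by_cases hi : i < n
  · exact congrFun h ⟨i, hi⟩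
  · have : 2 ^ n ≤ 2 ^ i := Nat.pow_le_pow_right (by norm_num) (by omega)
    rw [Nat.testBit_lt_two_pow (by omega), Nat.testBit_lt_two_pow (by omega)]

lemma binVec_bij (n : ℕ) : Function.Bijective (fun a : Fin (2 ^ n) => binVec n a) := by
  rw [Fintype.bijective_iff_injective_and_card]
  refine ⟨?_, by simp⟩
  intro a b h
  exact Fin.ext (binVec_inj a.2 b.2 h)

lemma sum_binVec (n : ℕ) (f : (Fin n → Bool) → ℝ) :
    ∑ x, f x = ∑ m ∈ Finset.range (2 ^ n), f (binVec n m) := by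
  rw [Finset.sum_range]
  exact ((binVec_bij n).sum_comp f).symm

lemma sum_pairs (f : ℕ → ℝ) (M : ℕ) :
    ∑ l ∈ Finset.range M, (f (2 * l) + f (2 * l + 1)) = ∑ m ∈ Finset.range (2 * M), f m := by
  induction M with
  | zero => simp
  | succ M ih =>
    rw [Finset.sum_range_succ, ih, show 2 * (M+1) = 2 * M + 1 + 1 by ring, Finset.sum_range_succ,
      Finset.sum_range_succ]; ring

lemma binVec_cases {k N : ℕ} (hN : N + 1 = 2 ^ k) (x : Fin (k+1) → Bool) :
    ∃ l ≤ N, x = binVec (k+1) (2 * l) ∨ x = binVec (k+1) (2 * l + 1) := by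
  obtain ⟨m, hm⟩ := (binVec_bij (k+1)).2 x
  have h2 := m.2
  have h3 : 2 ^ (k+1) = 2 * 2 ^ k := by ring
  refine ⟨m / 2, by omega, ?_⟩
  rcases Nat.mod_two_eq_zero_or_one m with h | h
  · left; rw [← hm]; simp only; congr 1; omega
  · right; rw [← hm]; simp only; congr 1; omega

lemma delta_bin {n a b : ℕ} (ha : a < 2 ^ n) (hb : b < 2 ^ n) :
    deltaAt (binVec n a) (binVec n b) = if a = b then 1 else 0 := by
  unfold deltaAt
  by_cases h : a = b
  · simp [h]
  · rw [if_neg, if_neg h]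
    intro h'; exact h (binVec_inj hb ha h').symm

lemma mix_even {k N : ℕ} (hN : N + 1 = 2 ^ k) (p : (Fin N → Bool) → ℝ) (lam : (Fin N → Bool) → ℝ)
    (Q : (Fin N → Bool) → (Fin (k+1) → Bool) → ℝ)
    (hQ : ∀ z x, Q z x = lam z * deltaAt (binVec (k+1) (2 * lidx z)) x
        + (1 - lam z) * deltaAt (binVec (k+1) (2 * lidx z + 1)) x) (l : ℕ) (hl : l ≤ N) :
    mix p Q (binVec (k+1) (2 * l)) = ∑ z, if lidx z = l then p z * lam z else 0 := by
  unfold mix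
  have h3 : 2 ^ (k+1) = 2 * 2 ^ k := by ring
  refine Finset.sum_congr rfl fun z _ => ?_
  have := lidx_le z
  rw [hQ, delta_bin (by omega) (by omega), delta_bin (by omega) (by omega),
    if_neg (show ¬ (2 * lidx z + 1 = 2 * l) by omega)]
  by_cases h : lidx z = l
  · simp [h]
  · rw [if_neg h, if_neg (by omega)]; ring

lemma mix_odd {k N : ℕ} (hN : N + 1 = 2 ^ k) (p : (Fin N → Bool) → ℝ) (lam : (Fin N → Bool) → ℝ)
    (Q : (Fin N → Bool) → (Fin (k+1) → Bool) → ℝ)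
    (hQ : ∀ z x, Q z x = lam z * deltaAt (binVec (k+1) (2 * lidx z)) x
        + (1 - lam z) * deltaAt (binVec (k+1) (2 * lidx z + 1)) x) (l : ℕ) (hl : l ≤ N) :
    mix p Q (binVec (k+1) (2 * l + 1)) = ∑ z, if lidx z = l then p z * (1 - lam z) else 0 := by
  unfold mix
  have h3 : 2 ^ (k+1) = 2 * 2 ^ k := by ring
  refine Finset.sum_congr rfl fun z _ => ?_
  have := lidx_le z
  rw [hQ, delta_bin (by omega) (by omega), delta_bin (by omega) (by omega),
    if_neg (show ¬ (2 * lidx z = 2 * l + 1) by omega)]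
  by_cases h : lidx z = l
  · simp [h]
  · rw [if_neg h, if_neg (by omega)]; ring

lemma lidx_surj {N l : ℕ} (hl : l ≤ N) : ∃ z : Fin N → Bool, lidx z = l := by
  induction N with
  | zero => exact ⟨fun _ => false, by have := lidx_le (fun _ : Fin 0 => false); omega⟩
  | succ N ih =>
    rcases Nat.lt_or_ge N l with h | h
    · exact ⟨Fin.snoc (fun _ => false) true, by rw [lidx_snoc_true]; omega⟩
    · obtain ⟨z, hz⟩ := ih h
      exact ⟨Fin.snoc z false, by rw [lidx_snoc_false, hz]⟩

lemma binVec_eq_iff (k l : ℕ) (x : Fin (k+1) → Bool) (b : Bool) (m : ℕ)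
    (hm : m = 2 * l + (if b then 1 else 0)) :
    x = binVec (k+1) m ↔ x 0 = b ∧ ∀ j : Fin k, x j.succ = l.testBit j := by
  have h0 : binVec (k+1) m 0 = b := by
    subst hm; cases b <;> simp [binVec, Nat.testBit_zero] <;> omega
  have hs : ∀ j : Fin k, binVec (k+1) m j.succ = l.testBit j := by
    intro j
    subst hm
    simp only [binVec, Fin.val_succ, Nat.testBit_succ]
    congr 1
    cases b <;> simp <;> omega
  rw [funext_iff, Fin.forall_fin_succ, h0]
  simp only [hs]

lemma in_closure {k N : ℕ} (w : Fin N → ℝ) (b : ℝ)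
    (Q : (Fin N → Bool) → (Fin (k+1) → Bool) → ℝ)
    (hQ : ∀ z x, Q z x = (1 - sigmoid ((∑ i, w i * bval (z i)) + b)) * deltaAt (binVec (k+1) (2 * lidx z)) x
        + (1 - (1 - sigmoid ((∑ i, w i * bval (z i)) + b))) * deltaAt (binVec (k+1) (2 * lidx z + 1)) x) :
    Q ∈ closure (Fset N (k+1)) := by
  choose v c hvc using fun j : Fin k => sign_lemma (fun l => l.testBit j) N
  let P : ℝ → (Fin N → Bool) → (Fin (k+1) → Bool) → ℝ := fun t y z =>
    ∏ j, (if z j then sigmoid ((∑ i, (Fin.cons w (fun j i => t * v j i) : Fin (k+1) → Fin N → ℝ) j i * bval (y i)) + (Fin.cons b (fun j => t * c j) : Fin (k+1) → ℝ) j)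
                  else 1 - sigmoid ((∑ i, (Fin.cons w (fun j i => t * v j i) : Fin (k+1) → Fin N → ℝ) j i * bval (y i)) + (Fin.cons b (fun j => t * c j) : Fin (k+1) → ℝ) j))
  have hP : ∀ t, P t ∈ Fset N (k+1) := fun t =>
    ⟨Fin.cons w (fun j i => t * v j i), Fin.cons b (fun j => t * c j), fun y z => rfl⟩
  refine mem_closure_of_tendsto (f := P) (b := Filter.atTop) ?_ (Filter.Eventually.of_forall hP)
  rw [tendsto_pi_nhds]; intro y
  rw [tendsto_pi_nhds]; intro x
  have hlim : Q y x = (if x 0 then sigmoid ((∑ i, w i * bval (y i)) + b)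
      else 1 - sigmoid ((∑ i, w i * bval (y i)) + b)) *
      ∏ j : Fin k, (if x j.succ = (lidx y).testBit j then (1:ℝ) else 0) := by
    have e0 : deltaAt (binVec (k+1) (2 * lidx y)) x
        = (if x 0 = false then 1 else 0) * ∏ j : Fin k, (if x j.succ = (lidx y).testBit j then (1:ℝ) else 0) := by
      unfold deltaAt
      rw [Finset.prod_ite_zero]
      simp only [binVec_eq_iff k (lidx y) x false (2 * lidx y) (by simp)]
      by_cases h : x 0 = false <;> simp [h]
    have e1 : deltaAt (binVec (k+1) (2 * lidx y + 1)) x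
        = (if x 0 = true then 1 else 0) * ∏ j : Fin k, (if x j.succ = (lidx y).testBit j then (1:ℝ) else 0) := by
      unfold deltaAt
      rw [Finset.prod_ite_zero]
      simp only [binVec_eq_iff k (lidx y) x true (2 * lidx y + 1) (by simp)]
      by_cases h : x 0 = true <;> simp [h]
    rw [hQ, e0, e1]
    cases x 0 <;> simp
  rw [hlim]
  simp only [P, Fin.prod_univ_succ, Fin.cons_zero, Fin.cons_succ]
  refine Filter.Tendsto.const_mul _ ?_
  refine tendsto_finsetProd _ ?_
  intro j _
  have hj := hvc j y
  have heq : ∀ t : ℝ, (∑ i, t * v j i * bval (y i)) + t * c j = t * ((∑ i, v j i * bval (y i)) + c j) := by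
    intro t; rw [mul_add, Finset.mul_sum]; simp only [mul_assoc]
  simp only [heq]
  set s := (∑ i, v j i * bval (y i)) + c j with hs
  cases hb : (lidx y).testBit j
  · simp only [hb] at hj
    have hj : s < 0 := by simpa using hj
    have ht : Filter.Tendsto (fun t : ℝ => sigmoid (t * s)) Filter.atTop (nhds 0) :=
      sigmoid_bot.comp (Filter.tendsto_id.atTop_mul_const_of_neg hj)
    cases hx : x j.succ
    · simpa using (tendsto_const_nhds (x := (1:ℝ))).sub ht
    · simpa using ht
  · simp only [hb] at hj
    have hj : 0 < s := by simpa using hj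
    have ht : Filter.Tendsto (fun t : ℝ => sigmoid (t * s)) Filter.atTop (nhds 1) :=
      sigmoid_top.comp (Filter.tendsto_id.atTop_mul_const hj)
    cases hx : x j.succ
    · simpa using (tendsto_const_nhds (x := (1:ℝ))).sub ht
    · simpa using ht

lemma sum_pos_aux {N : ℕ} (p lam : (Fin N → Bool) → ℝ) (hp : ∀ z, 0 < p z) (hl : ∀ z, 0 ≤ lam z)
    (l : ℕ) (h : 0 < ∑ z ∈ Finset.univ.filter (fun z : Fin N → Bool => lidx z = l), lam z) :
    0 < ∑ z, if lidx z = l then p z * lam z else 0 := by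
  rw [← Finset.sum_filter]
  obtain ⟨z, hz, hz2⟩ := Finset.exists_lt_of_sum_lt (f := fun _ => (0:ℝ)) (by simpa using h)
  exact Finset.sum_pos' (fun z _ => mul_nonneg (hp z).le (hl z)) ⟨z, hz, mul_pos (hp z) hz2⟩

def Qc (N n : ℕ) : Set ((Fin N → Bool) → (Fin n → Bool) → ℝ) :=
  {Q | ∃ lam : (Fin N → Bool) → ℝ,
    (∀ z, lam z ∈ Set.Icc (0:ℝ) 1) ∧
    (∀ z x, Q z x = lam z * deltaAt (binVec n (2 * lidx z)) x
        + (1 - lam z) * deltaAt (binVec n (2 * lidx z + 1)) x) ∧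
    Q ∈ closure (Fset N n) ∧
    (∀ l ≤ N, ∃ r : ℝ, 0 < r ∧
      (∑ z ∈ Finset.univ.filter (fun z => lidx z = l), lam z)
        = r * (∑ z ∈ Finset.univ.filter (fun z => lidx z = l), (1 - lam z)))}

lemma main (k N : ℕ) (hN : N + 1 = 2 ^ k) :
    {q | ∃ p ∈ Eset N, ∃ Q ∈ Qc N (k+1), q = mix p Q} = simplexPos (k+1) := by
  ext q
  constructor
  · rintro ⟨p, ⟨qq, hqq, hp⟩, Q, ⟨lam, hlam, hQ, -, hr⟩, rfl⟩
    obtain rfl : p = pr qq := funext hp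
    have hpos := pr_pos qq hqq
    refine ⟨?_, ?_⟩
    · intro x
      obtain ⟨l, hl, hx⟩ := binVec_cases hN x
      obtain ⟨r, hr0, hr⟩ := hr l hl
      have htot : 0 < (∑ z ∈ Finset.univ.filter (fun z : Fin N → Bool => lidx z = l), lam z) +
          (∑ z ∈ Finset.univ.filter (fun z : Fin N → Bool => lidx z = l), (1 - lam z)) := by
        rw [← Finset.sum_add_distrib]
        obtain ⟨z, hz⟩ := lidx_surj hl
        refine Finset.sum_pos (fun z _ => by linarith) ⟨z, by simp [hz]⟩
      have hb : 0 < (∑ z ∈ Finset.univ.filter (fun z : Fin N → Bool => lidx z = l), (1 - lam z)) := by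
        rw [hr] at htot
        by_contra hcon
        push Not at hcon
        nlinarith
      have ha : 0 < (∑ z ∈ Finset.univ.filter (fun z : Fin N → Bool => lidx z = l), lam z) := by
        rw [hr]; positivity
      rcases hx with rfl | rfl
      · rw [mix_even hN _ lam Q hQ l hl]
        exact sum_pos_aux _ _ hpos (fun z => (hlam z).1) l ha
      · rw [mix_odd hN _ lam Q hQ l hl]
        exact sum_pos_aux _ (fun z => 1 - lam z) hpos (fun z => by linarith [(hlam z).2]) l hb
    · unfold mix
      rw [Finset.sum_comm]
      simp only [← Finset.mul_sum]
      have : ∀ z, ∑ x, Q z x = 1 := by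
        intro z
        simp only [hQ, Finset.sum_add_distrib, ← Finset.mul_sum, deltaAt]
        simp
      simp [this, pr_sum]
  · rintro ⟨hq0, hq1⟩
    obtain ⟨qq, w, b, hqq, h⟩ := build (fun l => q (binVec (k+1) (2 * l)))
      (fun l => q (binVec (k+1) (2 * l + 1))) N (fun _ _ => hq0 _) (fun _ _ => hq0 _)
    have hS : ∑ l ∈ Finset.range (N+1), (q (binVec (k+1) (2 * l)) + q (binVec (k+1) (2 * l + 1))) = 1 := by
      rw [sum_pairs (fun m => q (binVec (k+1) m)), hN, ← pow_succ', ← sum_binVec, hq1]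
    simp only [hS, div_one] at h
    let lam : (Fin N → Bool) → ℝ := fun z => 1 - sigmoid ((∑ i, w i * bval (z i)) + b)
    let Q : (Fin N → Bool) → (Fin (k+1) → Bool) → ℝ := fun z x =>
      lam z * deltaAt (binVec (k+1) (2 * lidx z)) x
        + (1 - lam z) * deltaAt (binVec (k+1) (2 * lidx z + 1)) x
    have hl0 : ∀ z, 0 < lam z := fun z => by
      have := sigmoid_lt_one ((∑ i, w i * bval (z i)) + b)
      simp only [lam]; linarith
    have hl1 : ∀ z, 0 < 1 - lam z := fun z => by
      have := sigmoid_pos ((∑ i, w i * bval (z i)) + b)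
      simp only [lam]; linarith
    refine ⟨pr qq, ⟨qq, hqq, fun _ => rfl⟩, Q, ⟨lam, fun z => ⟨(hl0 z).le, by linarith [hl1 z]⟩,
      fun _ _ => rfl, in_closure w b Q (fun _ _ => rfl), ?_⟩, ?_⟩
    · intro l hl
      obtain ⟨z, hz⟩ := lidx_surj hl
      have hne : (Finset.univ.filter (fun z : Fin N → Bool => lidx z = l)).Nonempty := ⟨z, by simp [hz]⟩
      have hA := Finset.sum_pos (fun z _ => hl0 z) hne
      have hB := Finset.sum_pos (fun z _ => hl1 z) hne
      exact ⟨_, div_pos hA hB, (div_mul_cancel₀ _ hB.ne').symm⟩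
    · funext x
      obtain ⟨l, hl, hx⟩ := binVec_cases hN x
      rcases hx with rfl | rfl
      · rw [mix_even hN _ lam Q (fun _ _ => rfl) l hl]
        exact (h l hl).2.symm
      · rw [mix_odd hN _ lam Q (fun _ _ => rfl) l hl, ← (h l hl).1]
        simp only [lam, sub_sub_cancel]

end Aux6

/-- Proposition 6: for `n ≥ 2` and `N = 2^(n-1) - 1`,
`{p^⊤Q : p ∈ E_N, Q ∈ Q_n^N} = Δ_n^+`. -/
theorem image_of_products_and_mixture_kernels_is_positive_simplex (n : ℕ) (hn : 2 ≤ n) :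
    {q | ∃ p ∈ Eset (2 ^ (n - 1) - 1), ∃ Q ∈ Qcoll n, q = mix p Q} = simplexPos n := by
  obtain ⟨k, rfl⟩ : ∃ k, n = k + 1 := ⟨n - 1, by omega⟩
  exact Aux6.main k (2 ^ k - 1) (Nat.sub_add_cancel Nat.one_le_two_pow)
end

section
/- Let N ≥ 1 and let p be the product distribution on {0,1}^N with parameters p_j ∈ (0,1), and define q_i = ∑_{z: l(z)=i} p(z) for i ∈ {0,1,…,N}. Then q_0 > 0 and for every i ∈ {1,…,N}, q_i/q_0 = ((1−p_i)/p_i) · (1/∏_{j=1}^{i−1} p_j). In particular, for any prescribed positive reals t_1,…,t_N there is a choice of p_1,…,p_N ∈ (0,1) with q_i/q_0 = t_i for all i, so the map p ↦ (q_0,…,q_N) sends the set of such product distributions onto the relative interior of the N-dimensional probability simplex. -/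
open Finset

/-- The vector `q = (q_0, …, q_N)` where `q_i` is the probability, under the product
distribution with parameters `pp`, that the largest nonzero index of a sample equals `i`. -/
noncomputable def qvec (N : ℕ) (pp : Fin N → ℝ) : Fin (N + 1) → ℝ :=
  fun i => ∑ z ∈ Finset.univ.filter (fun z : Fin N → Bool => lidx z = (i : ℕ)),
    ∏ j, if z j then 1 - pp j else pp j

lemma lidx_eq_zero_iff {N : ℕ} (z : Fin N → Bool) : lidx z = 0 ↔ ∀ j, z j = false := by
  unfold lidx
  rw [← Nat.bot_eq_zero, Finset.sup_eq_bot_iff]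
  simp

lemma lidx_le {N : ℕ} (z : Fin N → Bool) : lidx z ≤ N := by
  unfold lidx
  apply Finset.sup_le
  intro j _
  exact j.2

lemma lidx_eq_succ_iff {N : ℕ} (z : Fin N → Bool) (i : Fin N) :
    lidx z = (i : ℕ) + 1 ↔ z i = true ∧ ∀ j, i < j → z j = false := by
  constructor
  · intro h
    have hub : ∀ j, z j = true → (j : ℕ) + 1 ≤ (i : ℕ) + 1 := by
      intro j hj
      rw [← h]
      unfold lidx
      exact Finset.le_sup (f := fun j : Fin N => (j : ℕ) + 1) (by simp [hj])
    have hne : (Finset.univ.filter (fun j => z j = true)).Nonempty := by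
      rw [Finset.nonempty_iff_ne_empty]
      intro he
      unfold lidx at h
      rw [he] at h
      simp at h
    obtain ⟨k, hk, hk2⟩ := Finset.exists_mem_eq_sup _ hne (fun j : Fin N => (j : ℕ) + 1)
    have h3 : (k : ℕ) + 1 = (i : ℕ) + 1 := by rw [← h]; exact hk2.symm
    have h4 : k = i := by ext; omega
    subst h4
    refine ⟨by simpa using hk, ?_⟩
    intro j hj
    by_contra hc
    have := hub j (by simpa using hc)
    have hj' : (k : ℕ) < j := hj
    omega
  · rintro ⟨h1, h2⟩
    unfold lidx
    apply le_antisymm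
    · apply Finset.sup_le
      intro j hj
      have hj1 : z j = true := by simpa using hj
      have : ¬ i < j := fun h => by simp [h2 j h] at hj1
      have : (j : ℕ) ≤ i := not_lt.mp this
      omega
    · exact Finset.le_sup (f := fun j : Fin N => (j : ℕ) + 1) (by simp [h1])

lemma qvec_zero (N : ℕ) (pp : Fin N → ℝ) : qvec N pp 0 = ∏ j, pp j := by
  unfold qvec
  have : Finset.univ.filter (fun z : Fin N → Bool => lidx z = ((0 : Fin (N+1)) : ℕ))
      = {fun _ => false} := by
    ext z
    simp [lidx_eq_zero_iff, funext_iff]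
  rw [this]
  simp

lemma qvec_succ (N : ℕ) (pp : Fin N → ℝ) (i : Fin N) : qvec N pp i.succ =
    ∏ j, (if j < i then 1 else if j = i then 1 - pp j else pp j) := by
  unfold qvec
  have : Finset.univ.filter (fun z : Fin N → Bool => lidx z = (i.succ : ℕ))
      = Fintype.piFinset (fun j => if j < i then (Finset.univ : Finset Bool)
          else if j = i then {true} else {false}) := by
    ext z
    simp only [Fin.val_succ, Finset.mem_filter, Finset.mem_univ, true_and, lidx_eq_succ_iff,
      Fintype.mem_piFinset]
    constructor
    · rintro ⟨h1, h2⟩ j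
      rcases lt_trichotomy j i with h | h | h
      · simp [h]
      · simp [h, h1]
      · simp [h.not_gt, h.ne', h2 j h]
    · intro h
      refine ⟨by simpa using h i, ?_⟩
      intro j hj
      simpa [hj.not_gt, hj.ne'] using h j
  rw [this, ← Finset.prod_univ_sum (fun j => if j < i then (Finset.univ : Finset Bool)
          else if j = i then {true} else {false})
          (fun j (b : Bool) => if b then 1 - pp j else pp j)]
  apply Finset.prod_congr rfl
  intro j _
  split_ifs <;> simp

lemma qvec_rel (N : ℕ) (pp : Fin N → ℝ) (i : Fin N) :
    qvec N pp i.succ * (pp i * ∏ j ∈ Finset.univ.filter (fun j => j < i), pp j)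
      = (1 - pp i) * qvec N pp 0 := by
  have h1 : pp i = ∏ j, (if j = i then pp j else 1) := by simp
  have h2 : 1 - pp i = ∏ j, (if j = i then 1 - pp j else 1) := by simp
  rw [qvec_zero, qvec_succ, Finset.prod_filter, h2]
  nth_rewrite 1 [h1]
  rw [← Finset.prod_mul_distrib, ← Finset.prod_mul_distrib, ← Finset.prod_mul_distrib]
  apply Finset.prod_congr rfl
  intro j _
  rcases lt_trichotomy j i with h | h | h
  · simp [h, h.ne]
  · simp [h]
  · simp [h.not_gt, h.ne']

lemma qvec_zero_pos (N : ℕ) (pp : Fin N → ℝ) (hp : ∀ j, pp j ∈ Set.Ioo (0:ℝ) 1) :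
    0 < qvec N pp 0 := by
  rw [qvec_zero]
  exact Finset.prod_pos fun j _ => (hp j).1

lemma qvec_ratio (N : ℕ) (pp : Fin N → ℝ) (hp : ∀ j, pp j ∈ Set.Ioo (0:ℝ) 1) (i : Fin N) :
    qvec N pp i.succ / qvec N pp 0
        = ((1 - pp i) / pp i) * (1 / ∏ j ∈ Finset.univ.filter (fun j => j < i), pp j) := by
  have h0 := qvec_zero_pos N pp hp
  have h1 : 0 < ∏ j ∈ Finset.univ.filter (fun j => j < i), pp j :=
    Finset.prod_pos fun j _ => (hp j).1
  have h2 := (hp i).1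
  have h := qvec_rel N pp i
  rw [div_mul_div_comm, mul_one, div_eq_div_iff h0.ne' (by positivity)]
  exact h

lemma qvec_pos (N : ℕ) (pp : Fin N → ℝ) (hp : ∀ j, pp j ∈ Set.Ioo (0:ℝ) 1)
    (i : Fin (N + 1)) : 0 < qvec N pp i := by
  refine Fin.cases (qvec_zero_pos N pp hp) (fun i => ?_) i
  rw [qvec_succ]
  apply Finset.prod_pos
  intro j _
  have := hp j
  split_ifs
  · exact one_pos
  · linarith [this.2]
  · exact this.1

lemma qvec_sum (N : ℕ) (pp : Fin N → ℝ) : ∑ i, qvec N pp i = 1 := by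
  unfold qvec
  have h : ∀ i : Fin (N+1), Finset.univ.filter (fun z : Fin N → Bool => lidx z = (i : ℕ))
      = Finset.univ.filter (fun z : Fin N → Bool =>
          (⟨lidx z, Nat.lt_succ_of_le (lidx_le z)⟩ : Fin (N+1)) = i) := by
    intro i
    ext z
    simp [Fin.ext_iff]
  simp only [h]
  rw [Finset.sum_fiberwise]
  have := Finset.prod_univ_sum (fun _ : Fin N => (Finset.univ : Finset Bool))
          (fun j (b : Bool) => if b then 1 - pp j else pp j)
  rw [Fintype.piFinset_univ] at this
  rw [← this]
  simp

lemma exists_ratio (N : ℕ) (t : Fin N → ℝ) (ht : ∀ i, 0 < t i) :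
    ∃ pp : Fin N → ℝ, (∀ j, pp j ∈ Set.Ioo (0:ℝ) 1) ∧
        ∀ i : Fin N, qvec N pp i.succ / qvec N pp 0 = t i := by
  obtain ⟨T, hT, hTt⟩ : ∃ T : ℕ → ℝ, (∀ n, 0 < T n) ∧ ∀ i : Fin N, T i = t i := by
    refine ⟨fun n => if h : n < N then t ⟨n, h⟩ else 1, ?_, ?_⟩
    · intro n
      dsimp only
      split_ifs
      · exact ht _
      · exact one_pos
    · intro i
      simp
  obtain ⟨S, hS0, hSs⟩ : ∃ S : ℕ → ℝ, S 0 = 1 ∧ ∀ n, S (n + 1) = S n + T n :=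
    ⟨fun n => 1 + ∑ k ∈ Finset.range n, T k, by simp, fun n => by
      simp only [Finset.sum_range_succ]; ring⟩
  have hSpos : ∀ n, 0 < S n := by
    intro n
    induction n with
    | zero => rw [hS0]; exact one_pos
    | succ n ih => rw [hSs]; linarith [hT n]
  have hp : ∀ j : Fin N, S j / S (j + 1) ∈ Set.Ioo (0:ℝ) 1 := by
    intro j
    refine ⟨div_pos (hSpos _) (hSpos _), ?_⟩
    rw [div_lt_one (hSpos _), hSs]
    linarith [hT j]
  refine ⟨fun j => S j / S (j + 1), hp, ?_⟩
  intro i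
  rw [qvec_ratio N _ hp]
  have hprod : ∏ j ∈ Finset.univ.filter (fun j : Fin N => j < i), S j / S (j + 1)
      = 1 / S i := by
    have hr : ∀ n, ∏ k ∈ Finset.range n, S k / S (k + 1) = 1 / S n := by
      intro n
      induction n with
      | zero => simp [hS0]
      | succ n ih =>
        rw [Finset.prod_range_succ, ih]
        have := (hSpos n).ne'
        field_simp
    rw [← hr]
    refine Finset.prod_bij (fun j _ => (j : ℕ)) ?_ ?_ ?_ ?_
    · intro j hj
      simpa using hj
    · intro a _ b _ h
      exact Fin.ext h
    · intro b hb
      have hb' : b < i := by simpa using hb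
      exact ⟨⟨b, hb'.trans i.2⟩, Finset.mem_filter.mpr ⟨Finset.mem_univ _, hb'⟩, rfl⟩
    · intro j _
      rfl
  rw [hprod, ← hTt i]
  have h1 := hSpos i
  have h2 := hSpos (i + 1)
  have h3 := hSs i
  have h4 : T i = S (i + 1) - S i := by linarith
  rw [h4]
  field_simp

/-- `q_0 > 0`, `q_i/q_0 = ((1-p_i)/p_i)·(1/∏_{j<i} p_j)`, the ratios `q_i/q_0` can be made
arbitrary positive reals, and `pp ↦ (q_0,…,q_N)` maps the product distributions onto the
relative interior of the `N`-dimensional probability simplex. -/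
theorem qvec_ratios_and_surjectivity (N : ℕ) (hN : 1 ≤ N) :
    (∀ pp : Fin N → ℝ, (∀ j, pp j ∈ Set.Ioo (0:ℝ) 1) →
      0 < qvec N pp 0 ∧
      ∀ i : Fin N, qvec N pp i.succ / qvec N pp 0
        = ((1 - pp i) / pp i) * (1 / ∏ j ∈ Finset.univ.filter (fun j => j < i), pp j)) ∧
    (∀ t : Fin N → ℝ, (∀ i, 0 < t i) →
      ∃ pp : Fin N → ℝ, (∀ j, pp j ∈ Set.Ioo (0:ℝ) 1) ∧
        ∀ i : Fin N, qvec N pp i.succ / qvec N pp 0 = t i) ∧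
    qvec N '' {pp | ∀ j, pp j ∈ Set.Ioo (0:ℝ) 1}
      = {v : Fin (N + 1) → ℝ | (∀ i, 0 < v i) ∧ ∑ i, v i = 1} := by
  refine ⟨fun pp hp => ⟨qvec_zero_pos N pp hp, qvec_ratio N pp hp⟩, exists_ratio N, ?_⟩
  ext v
  simp only [Set.mem_image, Set.mem_ofPred_eq]
  constructor
  · rintro ⟨pp, hp, rfl⟩
    exact ⟨qvec_pos N pp hp, qvec_sum N pp⟩
  · rintro ⟨hv, hs⟩
    obtain ⟨pp, hp, h⟩ := exists_ratio N (fun i => v i.succ / v 0)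
      (fun i => div_pos (hv _) (hv _))
    refine ⟨pp, hp, ?_⟩
    have hq0 := qvec_zero_pos N pp hp
    have hv0 := hv 0
    have hall : ∀ i, qvec N pp i * v 0 = v i * qvec N pp 0 := by
      intro i
      refine Fin.cases (mul_comm _ _) (fun i => ?_) i
      have := h i
      rwa [div_eq_div_iff hq0.ne' hv0.ne'] at this
    have hsum : v 0 = qvec N pp 0 := by
      have := Finset.sum_congr (rfl : (Finset.univ : Finset (Fin (N+1))) = _)
        (fun i _ => hall i)
      rwa [← Finset.sum_mul, ← Finset.sum_mul, qvec_sum, hs, one_mul, one_mul] at this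
    funext i
    have := hall i
    rw [← hsum] at this
    exact mul_right_cancel₀ hv0.ne' this
end

section
/- For n = 2 and N = 2^{n-1} − 1 = 1, set b = −(1,1)^⊤... [replaced by the general claim:] For any n ≥ 1 and N = 2^n − 1, define b = −(1,…,1)^⊤ ∈ ℝ^n and let the l-th column of W ∈ ℝ^{n×N} be 2^{l+1}(bin_n(l) − (1/2,…,1/2)) for l = 1,…,N. Then for every z ∈ {0,1}^N, sgn(Wz + b) = sgn(bin_n(l(z)) − (1/2,…,1/2)) entrywise, and in particular every entry of Wz + b is nonzero. -/
open Finset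

lemma lidx_succ_true {N : ℕ} (z : Fin (N + 1) → Bool) (h : z (Fin.last N) = true) :
    lidx z = N + 1 := by
  apply le_antisymm
  · apply Finset.sup_le
    intro j _
    have := j.2
    omega
  · have := Finset.le_sup (s := Finset.univ.filter (fun j => z j = true))
      (f := fun j : Fin (N + 1) => (j : ℕ) + 1) (b := Fin.last N) (by simp [h])
    simpa [lidx] using this

lemma lidx_succ_false {N : ℕ} (z : Fin (N + 1) → Bool) (h : z (Fin.last N) = false) :
    lidx z = lidx (fun i : Fin N => z i.castSucc) := by
  apply le_antisymm
  · apply Finset.sup_le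
    intro j hj
    induction j using Fin.lastCases with
    | last => simp [h] at hj
    | cast i =>
      exact Finset.le_sup (s := Finset.univ.filter (fun j : Fin N => z j.castSucc = true))
        (f := fun j : Fin N => (j : ℕ) + 1) (b := i) (by simpa using hj)
  · apply Finset.sup_le
    intro i hi
    exact Finset.le_sup (s := Finset.univ.filter (fun j => z j = true))
        (f := fun j : Fin (N + 1) => (j : ℕ) + 1) (b := i.castSucc) (by simpa using hi)

lemma orthant_aux (f : ℕ → Bool) (hf : f 0 = false) : ∀ (N : ℕ) (z : Fin N → Bool) (S : ℝ),
    S = ∑ c : Fin N, (2 ^ ((c : ℕ) + 2) * (bval (f ((c : ℕ) + 1)) - 1 / 2)) * bval (z c) →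
    (f (lidx z) = true → 2 ≤ S) ∧ (f (lidx z) = false → S ≤ 0) ∧
      S ≤ 2 ^ (N + 1) - 2 ∧ -(2 ^ (N + 1) - 2) ≤ S := by
  intro N
  induction N with
  | zero =>
    intro z S hS
    simp at hS
    subst hS
    simp [lidx, hf]
  | succ N ih =>
    intro z S hS
    rw [Fin.sum_univ_castSucc] at hS
    obtain ⟨h1, h2, h3, h4⟩ := ih (fun i => z i.castSucc) _ rfl
    simp only [Fin.val_castSucc, Fin.val_last] at hS
    set T : ℝ := ∑ c : Fin N, (2 ^ ((c : ℕ) + 2) * (bval (f ((c : ℕ) + 1)) - 1 / 2)) *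
      bval (z c.castSucc) with hT
    have hp : (0 : ℝ) < 2 ^ N := by positivity
    cases hz : z (Fin.last N) with
    | true =>
      rw [lidx_succ_true z hz]
      rw [hz] at hS
      cases hb : f (N + 1) <;> simp only [hb, bval, pow_succ] at hS h3 h4 ⊢ <;>
        norm_num at hS ⊢ <;> refine ⟨?_, ?_, ?_⟩ <;> linarith
    | false =>
      rw [lidx_succ_false z hz]
      rw [hz] at hS
      have : S = T := by rw [hS]; simp [bval]
      rw [this]
      simp only [pow_succ] at h3 h4 ⊢
      exact ⟨h1, h2, by linarith, by linarith⟩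

/-- For `b = -(1,…,1)` and `W` with `l`-th column `2^(l+1)(bin_n(l) - 1/2)` (`l = 1,…,N`,
here indexed by `c : Fin N` with `l = c + 1`), one has
`sgn(Wz + b) = sgn(bin_n(l(z)) - 1/2)` entrywise for every `z ∈ {0,1}^N`;
in particular every entry of `Wz + b` is nonzero. -/
theorem explicit_orthant_map (n : ℕ) (hn : 1 ≤ n) :
    ∀ z : Fin (2 ^ n - 1) → Bool, ∀ j : Fin n,
      (binVec n (lidx z) j = true →
        0 < (∑ c : Fin (2 ^ n - 1),
              (2 ^ ((c : ℕ) + 2) * (bval (binVec n ((c : ℕ) + 1) j) - 1 / 2)) * bval (z c))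
            + (-1)) ∧
      (binVec n (lidx z) j = false →
        (∑ c : Fin (2 ^ n - 1),
            (2 ^ ((c : ℕ) + 2) * (bval (binVec n ((c : ℕ) + 1) j) - 1 / 2)) * bval (z c))
          + (-1) < 0) := by
  intro z j
  obtain ⟨h1, h2, -, -⟩ := orthant_aux (fun l => binVec n l j) (by simp [binVec]) _ z _ rfl
  exact ⟨fun h => by linarith [h1 h], fun h => by linarith [h2 h]⟩
end
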